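/- Let S be an ordered semigroup with real multiplication satisfying axioms O1–O6, and let λ₁, λ₂ be functionals on S. Define λ : S → [0,∞] by λ(f) = inf{ λ₁(f₁) + λ₂(f₂) : f₁, f₂ ∈ S, f ≤ f₁ + f₂ }. Then the map f ↦ sup_{f' ≪ f} λ(f') is a functional on S that is the greatest lower bound of λ₁ and λ₂ in F(S). -/

import Mathlib

open scoped ENNReal

/-- `CC s t` : `s` is (sequentially) compactly contained in `t`, written `s ≪ t`. -/
def CC {S : Type*} [AddCommMonoid S] [PartialOrder S] (s t : S) : Prop :=
  ∀ u : ℕ → S, Monotone u → ∀ x : S, IsLUB (Set.range u) x → t ≤ x → ∃ n, s ≤ u n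

/-- An ordered semigroup (positive, with translation invariant order) satisfying axioms O1-O5. -/
structure CuO5 (S : Type*) [AddCommMonoid S] [PartialOrder S] : Prop where
  addRightMono : ∀ {s t : S}, s ≤ t → ∀ r : S, s + r ≤ t + r
  zeroLe : ∀ s : S, 0 ≤ s
  O1 : ∀ u : ℕ → S, Monotone u → ∃ x : S, IsLUB (Set.range u) x
  O2 : ∀ s : S, ∃ u : ℕ → S, (∀ n, CC (u n) (u (n + 1))) ∧ IsLUB (Set.range u) s
  O3 : ∀ {s₁ t₁ s₂ t₂ : S}, CC s₁ t₁ → CC s₂ t₂ → CC (s₁ + s₂) (t₁ + t₂)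
  O4 : ∀ u v : ℕ → S, Monotone u → Monotone v → ∀ x y : S,
    IsLUB (Set.range u) x → IsLUB (Set.range v) y →
    IsLUB (Set.range fun n => u n + v n) (x + y)
  O5 : ∀ {s' s t : S}, CC s' s → s ≤ t → ∃ r : S, s' + r ≤ t ∧ t ≤ s + r

/-- Axioms O1-O6. -/
structure CuO6 (S : Type*) [AddCommMonoid S] [PartialOrder S] extends CuO5 S : Prop where
  O6 : ∀ {s r t : S}, s ≤ r + t → ∀ {s' : S}, CC s' s →
    ∃ r' t' : S, s' ≤ r' + t' ∧ r' ≤ r ∧ r' ≤ s ∧ t' ≤ t ∧ t' ≤ s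

/-- A functional on `S`: additive, order preserving, zero preserving map to `[0,∞]`
preserving suprema of increasing sequences. -/
structure IsFunctional {S : Type*} [AddCommMonoid S] [PartialOrder S] (l : S → ℝ≥0∞) : Prop where
  map_zero : l 0 = 0
  map_add : ∀ s t : S, l (s + t) = l s + l t
  mono : ∀ {s t : S}, s ≤ t → l s ≤ l t
  map_sup : ∀ u : ℕ → S, Monotone u → ∀ x : S, IsLUB (Set.range u) x → l x = ⨆ n, l (u n)

/-- Real multiplication on `S` : a map `(0,∞] × S → S` additive, order preserving and
sup-(of increasing sequences)-preserving in each variable, with `1 · s = s`.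
Scalars are elements of `ℝ≥0∞` required to be positive. -/
structure RealMul (S : Type*) [AddCommMonoid S] [PartialOrder S] where
  smul : ℝ≥0∞ → S → S
  add_left : ∀ {a b : ℝ≥0∞}, 0 < a → 0 < b → ∀ s : S, smul (a + b) s = smul a s + smul b s
  add_right : ∀ {a : ℝ≥0∞}, 0 < a → ∀ s t : S, smul a (s + t) = smul a s + smul a t
  mono_left : ∀ {a b : ℝ≥0∞}, 0 < a → a ≤ b → ∀ s : S, smul a s ≤ smul b s
  mono_right : ∀ {a : ℝ≥0∞}, 0 < a → ∀ {s t : S}, s ≤ t → smul a s ≤ smul a t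
  sup_left : ∀ u : ℕ → ℝ≥0∞, Monotone u → 0 < u 0 → ∀ s : S,
    IsLUB (Set.range fun n => smul (u n) s) (smul (⨆ n, u n) s)
  sup_right : ∀ {a : ℝ≥0∞}, 0 < a → ∀ u : ℕ → S, Monotone u → ∀ x : S,
    IsLUB (Set.range u) x → IsLUB (Set.range fun n => smul a (u n)) (smul a x)
  one_smul : ∀ s : S, smul 1 s = s

/-- `D` is a dense subset of `S`: every element of `S` is the supremum of a rapidly
increasing sequence of elements of `D`. -/
def IsDenseSub {S : Type*} [AddCommMonoid S] [PartialOrder S] (D : Set S) : Prop :=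
  ∀ s : S, ∃ u : ℕ → S, (∀ n, u n ∈ D) ∧ (∀ n, CC (u n) (u (n + 1))) ∧ IsLUB (Set.range u) s

/-- `m` is the least upper bound of the functionals `l₁` and `l₂` in `F(S)`
(pointwise order). -/
def IsFSup {S : Type*} [AddCommMonoid S] [PartialOrder S] (l₁ l₂ m : S → ℝ≥0∞) : Prop :=
  IsFunctional m ∧ (∀ s, l₁ s ≤ m s) ∧ (∀ s, l₂ s ≤ m s) ∧
    ∀ d : S → ℝ≥0∞, IsFunctional d → (∀ s, l₁ s ≤ d s) → (∀ s, l₂ s ≤ d s) → ∀ s, m s ≤ d s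

/-- `m` is the greatest lower bound of the functionals `l₁` and `l₂` in `F(S)`
(pointwise order). -/
def IsFInf {S : Type*} [AddCommMonoid S] [PartialOrder S] (l₁ l₂ m : S → ℝ≥0∞) : Prop :=
  IsFunctional m ∧ (∀ s, m s ≤ l₁ s) ∧ (∀ s, m s ≤ l₂ s) ∧
    ∀ d : S → ℝ≥0∞, IsFunctional d → (∀ s, d s ≤ l₁ s) → (∀ s, d s ≤ l₂ s) → ∀ s, d s ≤ m s

/-- An isomorphism of ordered semigroups between `S` and the extended natural numbers. -/
def IsOrdSemigroupIso {S : Type*} [AddCommMonoid S] [PartialOrder S] (e : S ≃ ℕ∞) : Prop :=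
  (∀ a b : S, e (a + b) = e a + e b) ∧ e 0 = 0 ∧ ∀ a b : S, a ≤ b ↔ e a ≤ e b

/-!
Write `K` for the infimal convolution of `l₁` and `l₂`. It is monotone and subadditive, and its
lower regularization is the greatest functional below `K`, hence the infimum, as soon as
`K f' + K g ≤ K (f + g)` for all `f' ≪ f`.

Suppose `f + g ≤ u + v`. By (O6) some `x + y ≤ f` with `2x ≤ u` and `2y ≤ v` has `f' ≤ 2(x + y)`.
By (O5), up to compact containment, `x` and `y` can be subtracted from `u` and `v`, and `x + y` from
`f`; the remainders `r`, `a`, `b` satisfy `x + y + r + g ≤ x + y + a + b`. The term `x + y` cancels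
under `K` because `x + y ≤ a + b` and `K` is homogeneous. So splitting off `x + y`, which accounts
for at least half of `K f'`, loses nothing, and an inequality `t * K f' + K g ≤ K (f + g)` valid for
all `f' ≪ f` improves to the same inequality with `(1 + t) / 2` in place of `t`.
-/

section

open Filter Topology

variable {S : Type*} [AddCommMonoid S] [PartialOrder S]

theorem CC.le {s t : S} (h : CC s t) : s ≤ t :=
  (h (fun _ => t) monotone_const t (by simp) le_rfl).elim fun _ => id

theorem CC.mono {s s' t t' : S} (h : CC s t) (hs : s' ≤ s) (ht : t ≤ t') : CC s' t' :=
  fun u hu x hx htx => (h u hu x hx (ht.trans htx)).imp fun _ => hs.trans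

namespace CuO5

theorem isOrderedAddMonoid (hS : CuO5 S) : IsOrderedAddMonoid S where
  add_le_add_left _ _ h r := hS.addRightMono h r

theorem cc_zero (hS : CuO5 S) (s : S) : CC 0 s := fun u _ _ _ _ => ⟨0, hS.zeroLe (u 0)⟩

theorem exists_monotone_cc_isLUB (hS : CuO5 S) (s : S) :
    ∃ u : ℕ → S, Monotone u ∧ (∀ n, CC (u n) s) ∧ IsLUB (Set.range u) s := by
  obtain ⟨u, hu, hs⟩ := hS.O2 s
  exact ⟨u, monotone_nat_of_le_succ fun n => (hu n).le,
    fun n => (hu n).mono le_rfl (hs.1 ⟨n + 1, rfl⟩), hs⟩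

theorem exists_cc_cc (hS : CuO5 S) {s t : S} (h : CC s t) : ∃ r, CC s r ∧ CC r t := by
  obtain ⟨u, hu, ht⟩ := hS.O2 t
  obtain ⟨n, hn⟩ := h u (monotone_nat_of_le_succ fun n => (hu n).le) t ht le_rfl
  exact ⟨u (n + 1), (hu n).mono hn le_rfl, (hu (n + 1)).mono le_rfl (ht.1 ⟨n + 2, rfl⟩)⟩

theorem exists_cc_le_add_of_cc_add (hS : CuO5 S) {f s t : S} (h : CC f (s + t)) :
    ∃ s' t', CC s' s ∧ CC t' t ∧ f ≤ s' + t' := by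
  have := hS.isOrderedAddMonoid
  obtain ⟨u, hu, hus, hs⟩ := hS.exists_monotone_cc_isLUB s
  obtain ⟨v, hv, hvt, ht⟩ := hS.exists_monotone_cc_isLUB t
  obtain ⟨n, hn⟩ := h _ (hu.add hv) _ (hS.O4 u v hu hv s t hs ht) le_rfl
  exact ⟨u n, v n, hus n, hvt n, hn⟩

theorem exists_cc_remainder (hS : CuO5 S) {w' w f' f : S} (hw : CC w' w) (hwf : w ≤ f)
    (hf : CC f' f) : ∃ r' r, CC r' r ∧ w' + r ≤ f ∧ f' ≤ w + r' := by
  obtain ⟨r, hr, hfr⟩ := hS.O5 hw hwf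
  obtain ⟨s, r', hs, hr', hf'⟩ := hS.exists_cc_le_add_of_cc_add (hf.mono le_rfl hfr)
  exact ⟨r', r, hr', hr, hf'.trans (hS.addRightMono hs.le r')⟩

end CuO5

/-- The ordered monoid `S` is uniquely `2`-divisible: doubling is an order isomorphism of `S`.
Halving takes the place of real multiplication in the formation of infima of functionals. -/
structure IsTwoDivisible (S : Type*) [AddCommMonoid S] [PartialOrder S] : Prop where
  exists_add_self_eq : ∀ s : S, ∃ t, t + t = s
  le_of_add_self_le : ∀ {s t : S}, s + s ≤ t + t → s ≤ t

theorem RealMul.isTwoDivisible (rm : RealMul S) : IsTwoDivisible S := by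
  have half_pos : (0 : ℝ≥0∞) < 2⁻¹ := by simp
  have half_add_half (s : S) : rm.smul 2⁻¹ s + rm.smul 2⁻¹ s = s := by
    rw [← rm.add_left half_pos half_pos, ENNReal.inv_two_add_inv_two, rm.one_smul]
  have half_add_self (s : S) : rm.smul 2⁻¹ (s + s) = s := by
    rw [rm.add_right half_pos, half_add_half]
  refine ⟨fun s => ⟨rm.smul 2⁻¹ s, half_add_half s⟩, fun {s t} h => ?_⟩
  simpa only [half_add_self] using rm.mono_right half_pos h

theorem CuO6.exists_halves (hS : CuO6 S) (h2 : IsTwoDivisible S) {f' f u v : S} (hf : CC f' f)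
    (huv : f ≤ u + v) :
    ∃ x y, x + y ≤ f ∧ f' ≤ (x + x) + (y + y) ∧ x + x ≤ u ∧ y + y ≤ v := by
  have := hS.isOrderedAddMonoid
  obtain ⟨f₁, f₂, hf', hf₁u, hf₁, hf₂v, hf₂⟩ := hS.O6 huv hf
  obtain ⟨x, rfl⟩ := h2.exists_add_self_eq f₁
  obtain ⟨y, rfl⟩ := h2.exists_add_self_eq f₂
  refine ⟨x, y, h2.le_of_add_self_le ?_, hf', hf₁u, hf₂v⟩
  rw [add_add_add_comm]
  exact add_le_add hf₁ hf₂

theorem CuO5.exists_ge_remainder (hS : CuO5 S) (h2 : IsTwoDivisible S) {x' x u : S} (hx : CC x' x)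
    (hxu : x + x ≤ u) : ∃ a, x ≤ a ∧ x' + a ≤ u ∧ u ≤ x + a := by
  have := hS.isOrderedAddMonoid
  obtain ⟨h, rfl⟩ := h2.exists_add_self_eq u
  have hxh : x ≤ h := h2.le_of_add_self_le hxu
  obtain ⟨r, hr, hr'⟩ := hS.O5 hx hxh
  refine ⟨r + h, hxh.trans (le_add_of_nonneg_left (hS.zeroLe r)), ?_, ?_⟩
  · rw [← add_assoc]
    exact hS.addRightMono hr h
  · rw [← add_assoc]
    exact hS.addRightMono hr' h

theorem nsmul_le_add_nsmul [IsOrderedAddMonoid S] {z f w : S} (hz : 0 ≤ z) (hzw : z ≤ w)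
    (h : z + f ≤ z + w) (n : ℕ) : n • f ≤ w + n • w := by
  have iterate : z + n • f ≤ z + n • w := by
    induction n with
    | zero => simp
    | succ n ih =>
      calc z + (n + 1) • f = (z + n • f) + f := by rw [succ_nsmul, add_assoc]
        _ ≤ (z + n • w) + f := by gcongr
        _ = (z + f) + n • w := by abel
        _ ≤ (z + w) + n • w := by gcongr
        _ = z + (n + 1) • w := by rw [succ_nsmul]; abel
  calc n • f ≤ z + n • f := le_add_of_nonneg_left hz
    _ ≤ z + n • w := iterate
    _ ≤ w + n • w := by gcongr

theorem map_two_pow_nsmul {M : Type*} [AddMonoid M] {l : M → ℝ≥0∞}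
    (hdouble : ∀ s, l (s + s) = 2 * l s) (k : ℕ) (s : M) : l (2 ^ k • s) = 2 ^ k * l s := by
  induction k with
  | zero => simp
  | succ k ih => rw [pow_succ, mul_nsmul, two_nsmul, hdouble, ih, pow_succ', mul_assoc]

theorem tendsto_inv_two_pow : Tendsto (fun k : ℕ => (2⁻¹ : ℝ≥0∞) ^ k) atTop (𝓝 0) :=
  ENNReal.tendsto_pow_atTop_nhds_zero_of_lt_one (by simp)

theorem map_le_map_of_add_le_add [IsOrderedAddMonoid S] {l : S → ℝ≥0∞} (hmono : Monotone l)
    (hsub : ∀ s t, l (s + t) ≤ l s + l t) (hdouble : ∀ s, l (s + s) = 2 * l s) {z f w : S}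
    (hz : 0 ≤ z) (hzw : z ≤ w) (h : z + f ≤ z + w) : l f ≤ l w := by
  have bound (k : ℕ) : l f ≤ (2⁻¹ ^ k + 1) * l w := by
    have hk : 2 ^ k * l f ≤ l w + 2 ^ k * l w := by
      rw [← map_two_pow_nsmul hdouble, ← map_two_pow_nsmul hdouble]
      exact (hmono (nsmul_le_add_nsmul hz hzw h _)).trans (hsub _ _)
    have hinv : (2⁻¹ : ℝ≥0∞) ^ k * 2 ^ k = 1 := by
      rw [← mul_pow, ENNReal.inv_mul_cancel two_ne_zero ENNReal.ofNat_ne_top, one_pow]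
    calc l f = 2⁻¹ ^ k * (2 ^ k * l f) := by rw [← mul_assoc, hinv, one_mul]
      _ ≤ 2⁻¹ ^ k * (l w + 2 ^ k * l w) := by gcongr
      _ = (2⁻¹ ^ k + 2⁻¹ ^ k * 2 ^ k) * l w := by ring
      _ = (2⁻¹ ^ k + 1) * l w := by rw [hinv]
  have hlim : Tendsto (fun k : ℕ => ((2⁻¹ : ℝ≥0∞) ^ k + 1) * l w) atTop (𝓝 ((0 + 1) * l w)) :=
    ENNReal.Tendsto.mul_const (tendsto_inv_two_pow.add_const 1) (Or.inl (by simp))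
  simpa using ge_of_tendsto' hlim bound

theorem IsFunctional.map_add_le {l : S → ℝ≥0∞} (h : IsFunctional l) (s t : S) :
    l (s + t) ≤ l s + l t :=
  (h.map_add s t).le

/-- The lower regularization `f ↦ sup {l f' | f' ≪ f}` of a map `l`, which turns `l` into a map
preserving suprema of increasing sequences. -/
noncomputable def lowerReg (l : S → ℝ≥0∞) (f : S) : ℝ≥0∞ := sSup (l '' {f' | CC f' f})

section LowerReg

variable {l l' : S → ℝ≥0∞}

theorem le_lowerReg {f f' : S} (h : CC f' f) : l f' ≤ lowerReg l f := le_sSup ⟨f', h, rfl⟩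

theorem lowerReg_le {f : S} {c : ℝ≥0∞} (h : ∀ f', CC f' f → l f' ≤ c) : lowerReg l f ≤ c :=
  sSup_le (Set.forall_mem_image.2 h)

theorem lowerReg_mono_right (h : ∀ s, l s ≤ l' s) (f : S) : lowerReg l f ≤ lowerReg l' f :=
  lowerReg_le fun f' hf => (h f').trans (le_lowerReg hf)

theorem lowerReg_le_self (h : Monotone l) (f : S) : lowerReg l f ≤ l f :=
  lowerReg_le fun _ hf => h hf.le

theorem CuO5.lowerReg_add_lowerReg_le (hS : CuO5 S) {s t : S} {c : ℝ≥0∞}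
    (h : ∀ s' t', CC s' s → CC t' t → l s' + l' t' ≤ c) : lowerReg l s + lowerReg l' t ≤ c := by
  simp only [lowerReg, sSup_image]
  exact ENNReal.biSup_add_biSup_le ⟨0, hS.cc_zero s⟩ ⟨0, hS.cc_zero t⟩
    fun s' hs t' ht => h s' t' hs ht

theorem IsFunctional.lowerReg_eq (hS : CuO5 S) (h : IsFunctional l) (f : S) :
    lowerReg l f = l f := by
  obtain ⟨u, hu, huf, hf⟩ := hS.exists_monotone_cc_isLUB f
  refine le_antisymm (lowerReg_le fun f' hf' => h.mono hf'.le) ?_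
  rw [h.map_sup u hu f hf]
  exact iSup_le fun n => le_lowerReg (huf n)

theorem isFunctional_lowerReg (hS : CuO5 S) (hzero : l 0 = 0) (hmono : Monotone l)
    (hsub : ∀ f g, l (f + g) ≤ l f + l g)
    (hsuper : ∀ f' f g, CC f' f → l f' + l g ≤ l (f + g)) : IsFunctional (lowerReg l) where
  map_zero := le_antisymm ((lowerReg_le_self hmono 0).trans_eq hzero) zero_le
  mono h := lowerReg_le fun _ hs => le_lowerReg (hs.mono le_rfl h)
  map_add s t := by
    refine le_antisymm (lowerReg_le fun f hf => ?_)
      (hS.lowerReg_add_lowerReg_le fun s' t' hs ht => ?_)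
    · obtain ⟨s', t', hs, ht, hle⟩ := hS.exists_cc_le_add_of_cc_add hf
      exact (hmono hle).trans ((hsub s' t').trans (add_le_add (le_lowerReg hs) (le_lowerReg ht)))
    · obtain ⟨r, hsr, hrs⟩ := hS.exists_cc_cc hs
      exact (hsuper s' r t' hsr).trans (le_lowerReg (hS.O3 hrs ht))
  map_sup u hu x hx := by
    refine le_antisymm (lowerReg_le fun s hs => ?_)
      (iSup_le fun n => lowerReg_le fun s hs => le_lowerReg (hs.mono le_rfl (hx.1 ⟨n, rfl⟩)))
    obtain ⟨r, hsr, hrx⟩ := hS.exists_cc_cc hs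
    obtain ⟨n, hn⟩ := hrx u hu x hx le_rfl
    exact le_iSup_of_le n (le_lowerReg (hsr.mono le_rfl hn))

end LowerReg

theorem IsFunctional.add_le_of_forall_cc {l₁ l₂ : S → ℝ≥0∞} (hS : CuO5 S) (h₁ : IsFunctional l₁)
    (h₂ : IsFunctional l₂) {x y : S} {c d : ℝ≥0∞}
    (h : ∀ x' y', CC x' x → CC y' y → l₁ x' + l₂ y' + c ≤ d) : l₁ x + l₂ y + c ≤ d := by
  have hcd : c ≤ d := le_add_self.trans (h 0 0 (hS.cc_zero x) (hS.cc_zero y))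
  by_cases hc : c = ∞
  · exact le_top.trans (hc.ge.trans hcd)
  rw [← h₁.lowerReg_eq hS, ← h₂.lowerReg_eq hS, ← tsub_add_cancel_of_le hcd]
  gcongr
  exact hS.lowerReg_add_lowerReg_le fun x' y' hx hy =>
    ENNReal.le_sub_of_add_le_right hc (h x' y' hx hy)

/-- The infimal convolution `f ↦ inf {l₁ f₁ + l₂ f₂ | f ≤ f₁ + f₂}`, that is, the map `λ` of the
Kantorovich formula before regularization. -/
noncomputable def infConv (l₁ l₂ : S → ℝ≥0∞) (f : S) : ℝ≥0∞ :=
  sInf {x | ∃ f₁ f₂ : S, f ≤ f₁ + f₂ ∧ x = l₁ f₁ + l₂ f₂}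

section InfConv

variable {l₁ l₂ : S → ℝ≥0∞}

theorem infConv_le {f f₁ f₂ : S} (h : f ≤ f₁ + f₂) : infConv l₁ l₂ f ≤ l₁ f₁ + l₂ f₂ :=
  sInf_le ⟨f₁, f₂, h, rfl⟩

theorem le_infConv {f : S} {c : ℝ≥0∞} (h : ∀ f₁ f₂, f ≤ f₁ + f₂ → c ≤ l₁ f₁ + l₂ f₂) :
    c ≤ infConv l₁ l₂ f := by
  refine le_sInf ?_
  rintro _ ⟨f₁, f₂, hf, rfl⟩
  exact h f₁ f₂ hf

theorem infConv_le_left (h₂ : l₂ 0 = 0) (f : S) : infConv l₁ l₂ f ≤ l₁ f := by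
  simpa only [h₂, add_zero] using infConv_le (l₁ := l₁) (l₂ := l₂) (add_zero f).ge

theorem infConv_le_right (h₁ : l₁ 0 = 0) (f : S) : infConv l₁ l₂ f ≤ l₂ f := by
  simpa only [h₁, zero_add] using infConv_le (l₁ := l₁) (l₂ := l₂) (zero_add f).ge

theorem infConv_mono : Monotone (infConv l₁ l₂) :=
  fun _ _ h => le_infConv fun _ _ hf => infConv_le (h.trans hf)

theorem infConv_add_le [IsOrderedAddMonoid S] (h₁ : ∀ s t, l₁ (s + t) ≤ l₁ s + l₁ t)
    (h₂ : ∀ s t, l₂ (s + t) ≤ l₂ s + l₂ t) (f g : S) :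
    infConv l₁ l₂ (f + g) ≤ infConv l₁ l₂ f + infConv l₁ l₂ g := by
  rw [← tsub_le_iff_right]
  refine le_infConv fun f₁ f₂ hf => ?_
  rw [tsub_le_iff_left, ← tsub_le_iff_right]
  refine le_infConv fun g₁ g₂ hg => ?_
  rw [tsub_le_iff_right]
  calc infConv l₁ l₂ (f + g) ≤ l₁ (f₁ + g₁) + l₂ (f₂ + g₂) :=
        infConv_le ((add_le_add hf hg).trans_eq (add_add_add_comm _ _ _ _))
    _ ≤ (l₁ f₁ + l₁ g₁) + (l₂ f₂ + l₂ g₂) := add_le_add (h₁ _ _) (h₂ _ _)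
    _ = (l₁ g₁ + l₂ g₂) + (l₁ f₁ + l₂ f₂) := by ring

theorem infConv_add_self [IsOrderedAddMonoid S] (h2 : IsTwoDivisible S)
    (h₁ : ∀ s t, l₁ (s + t) = l₁ s + l₁ t) (h₂ : ∀ s t, l₂ (s + t) = l₂ s + l₂ t) (f : S) :
    infConv l₁ l₂ (f + f) = 2 * infConv l₁ l₂ f := by
  refine le_antisymm ?_ (le_infConv fun u v huv => ?_)
  · rw [two_mul]
    exact infConv_add_le (fun s t => (h₁ s t).le) (fun s t => (h₂ s t).le) f f
  obtain ⟨x, rfl⟩ := h2.exists_add_self_eq u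
  obtain ⟨y, rfl⟩ := h2.exists_add_self_eq v
  have hf : f ≤ x + y := h2.le_of_add_self_le (huv.trans_eq (add_add_add_comm _ _ _ _))
  calc 2 * infConv l₁ l₂ f ≤ 2 * (l₁ x + l₂ y) := by gcongr; exact infConv_le hf
    _ = l₁ (x + x) + l₂ (y + y) := by rw [h₁, h₂]; ring

theorem IsFunctional.exists_remainder_infConv_le (hS : CuO5 S) (h2 : IsTwoDivisible S)
    (h₁ : IsFunctional l₁) (h₂ : IsFunctional l₂) {f' f g u v x' x y' y : S} (hf : CC f' f)
    (huv : f + g ≤ u + v) (hxy : x + y ≤ f) (hxu : x + x ≤ u) (hyv : y + y ≤ v) (hx : CC x' x)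
    (hy : CC y' y) :
    ∃ r' r, CC r' r ∧ f' ≤ x + y + r' ∧
      l₁ x' + l₂ y' + infConv l₁ l₂ (r + g) ≤ l₁ u + l₂ v := by
  have := hS.isOrderedAddMonoid
  obtain ⟨x'', hx'', hxx⟩ := hS.exists_cc_cc hx
  obtain ⟨y'', hy'', hyy⟩ := hS.exists_cc_cc hy
  obtain ⟨a, hxa, hau, hua⟩ :=
    hS.exists_ge_remainder h2 hx'' ((add_le_add hxx.le hxx.le).trans hxu)
  obtain ⟨b, hyb, hbv, hvb⟩ :=
    hS.exists_ge_remainder h2 hy'' ((add_le_add hyy.le hyy.le).trans hyv)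
  obtain ⟨r', r, hr, hrf, hf'⟩ := hS.exists_cc_remainder (hS.O3 hxx hyy) hxy hf
  have hcancel : x'' + y'' + (r + g) ≤ x'' + y'' + (a + b) :=
    calc x'' + y'' + (r + g) = x'' + y'' + r + g := (add_assoc _ _ _).symm
      _ ≤ f + g := by gcongr
      _ ≤ u + v := huv
      _ ≤ (x'' + a) + (y'' + b) := add_le_add hua hvb
      _ = x'' + y'' + (a + b) := add_add_add_comm _ _ _ _
  have hrab : infConv l₁ l₂ (r + g) ≤ infConv l₁ l₂ (a + b) :=
    map_le_map_of_add_le_add infConv_mono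
      (infConv_add_le h₁.map_add_le h₂.map_add_le)
      (infConv_add_self h2 h₁.map_add h₂.map_add) (hS.zeroLe _) (add_le_add hxa hyb) hcancel
  refine ⟨r', r, hr, hf', ?_⟩
  calc l₁ x' + l₂ y' + infConv l₁ l₂ (r + g) ≤ l₁ x' + l₂ y' + (l₁ a + l₂ b) := by
        gcongr
        exact hrab.trans (infConv_le le_rfl)
    _ = l₁ (x' + a) + l₂ (y' + b) := by rw [h₁.map_add, h₂.map_add, add_add_add_comm]
    _ ≤ l₁ u + l₂ v := add_le_add (h₁.mono hau) (h₂.mono hbv)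

theorem IsFunctional.infConv_superadditive_step (hS : CuO6 S) (h2 : IsTwoDivisible S)
    (h₁ : IsFunctional l₁) (h₂ : IsFunctional l₂) {g : S} {t s : ℝ≥0∞} (hts : t + 2 * s = 1)
    (ht : ∀ f' f, CC f' f → t * infConv l₁ l₂ f' + infConv l₁ l₂ g ≤ infConv l₁ l₂ (f + g))
    {f' f : S} (hf : CC f' f) :
    (t + s) * infConv l₁ l₂ f' + infConv l₁ l₂ g ≤ infConv l₁ l₂ (f + g) := by
  have := hS.isOrderedAddMonoid
  set K := infConv l₁ l₂
  refine le_infConv fun u v huv => ?_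
  obtain ⟨x, y, hxy, hf'xy, hxu, hyv⟩ :=
    hS.exists_halves h2 hf ((le_add_of_nonneg_right (hS.zeroLe g)).trans huv)
  set p := l₁ x + l₂ y
  have hpH : p ≤ l₁ u + l₂ v := add_le_add
    (h₁.mono ((le_add_of_nonneg_left (hS.zeroLe x)).trans hxu))
    (h₂.mono ((le_add_of_nonneg_left (hS.zeroLe y)).trans hyv))
  by_cases hp : p = ∞
  · exact le_top.trans (hp.ge.trans hpH)
  have hf'p : K f' ≤ 2 * p :=
    calc K f' ≤ l₁ (x + x) + l₂ (y + y) := infConv_le hf'xy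
      _ = 2 * p := by rw [h₁.map_add, h₂.map_add]; ring
  -- The subtracted part only approximates `x` and `y` from below, so `p` is kept on both sides
  -- until the approximation has been removed.
  refine (ENNReal.add_le_add_iff_left hp).1
    (h₁.add_le_of_forall_cc hS.toCuO5 h₂ fun x' y' hx hy => ?_)
  obtain ⟨r', r, hr, hf'r, hle⟩ :=
    h₁.exists_remainder_infConv_le hS.toCuO5 h2 h₂ hf huv hxy hxu hyv hx hy
  have hf'R : K f' ≤ p + K r' :=
    (infConv_mono hf'r).trans ((infConv_add_le h₁.map_add_le h₂.map_add_le _ _).trans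
      (by gcongr; exact infConv_le le_rfl))
  calc l₁ x' + l₂ y' + ((t + s) * K f' + K g)
      = l₁ x' + l₂ y' + (t * K f' + s * K f' + K g) := by rw [add_mul]
    _ ≤ l₁ x' + l₂ y' + (t * (p + K r') + s * (2 * p) + K g) := by gcongr
    _ = (t + 2 * s) * p + (l₁ x' + l₂ y' + (t * K r' + K g)) := by ring
    _ ≤ p + (l₁ x' + l₂ y' + K (r + g)) := by rw [hts, one_mul]; gcongr; exact ht r' r hr
    _ ≤ p + (l₁ u + l₂ v) := by gcongr

theorem IsFunctional.infConv_add_infConv_le (hS : CuO6 S) (h2 : IsTwoDivisible S)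
    (h₁ : IsFunctional l₁) (h₂ : IsFunctional l₂) (f' f g : S) (hf : CC f' f) :
    infConv l₁ l₂ f' + infConv l₁ l₂ g ≤ infConv l₁ l₂ (f + g) := by
  have := hS.isOrderedAddMonoid
  have approx (k : ℕ) : ∀ f' f, CC f' f →
      (1 - 2⁻¹ ^ k) * infConv l₁ l₂ f' + infConv l₁ l₂ g ≤ infConv l₁ l₂ (f + g) := by
    induction k with
    | zero => simpa using fun _ f _ => infConv_mono (le_add_of_nonneg_left (hS.zeroLe f))
    | succ k ih =>
      have hdouble : 2 * (2⁻¹ : ℝ≥0∞) ^ (k + 1) = 2⁻¹ ^ k := by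
        rw [pow_succ', ← mul_assoc, ENNReal.mul_inv_cancel two_ne_zero ENNReal.ofNat_ne_top,
          one_mul]
      have hone : 1 - 2⁻¹ ^ k + 2 * (2⁻¹ : ℝ≥0∞) ^ (k + 1) = 1 := by
        rw [hdouble, tsub_add_cancel_of_le (pow_le_one₀ zero_le (by simp))]
      have hsucc : 1 - (2⁻¹ : ℝ≥0∞) ^ (k + 1) = 1 - 2⁻¹ ^ k + 2⁻¹ ^ (k + 1) :=
        ENNReal.sub_eq_of_eq_add (by finiteness) (by rw [add_assoc, ← two_mul, hone])
      intro f' f hf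
      rw [hsucc]
      exact h₁.infConv_superadditive_step hS h2 h₂ hone ih hf
  have hlim : Tendsto (fun k : ℕ => (1 - (2⁻¹ : ℝ≥0∞) ^ k) * infConv l₁ l₂ f' + infConv l₁ l₂ g)
      atTop (𝓝 ((1 - 0) * infConv l₁ l₂ f' + infConv l₁ l₂ g)) :=
    (ENNReal.Tendsto.mul_const (ENNReal.Tendsto.sub tendsto_const_nhds tendsto_inv_two_pow
      (Or.inl ENNReal.one_ne_top)) (Or.inl (by simp))).add_const _
  simpa using le_of_tendsto' hlim fun k => approx k f' f hf

end InfConv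

end

theorem inf_kantorovich_general {S : Type*} [AddCommMonoid S] [PartialOrder S] (hS : CuO6 S)
    (h2 : IsTwoDivisible S) {l₁ l₂ : S → ℝ≥0∞} (h₁ : IsFunctional l₁) (h₂ : IsFunctional l₂) :
    IsFInf l₁ l₂ (lowerReg (infConv l₁ l₂)) := by
  have := hS.isOrderedAddMonoid
  have hzero : infConv l₁ l₂ 0 = 0 :=
    le_antisymm ((infConv_le_left h₂.map_zero 0).trans_eq h₁.map_zero) zero_le
  have le_self := lowerReg_le_self (infConv_mono (l₁ := l₁) (l₂ := l₂))
  refine ⟨isFunctional_lowerReg hS.toCuO5 hzero infConv_mono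
      (infConv_add_le h₁.map_add_le h₂.map_add_le) (h₁.infConv_add_infConv_le hS h2 h₂),
    fun s => (le_self s).trans (infConv_le_left h₂.map_zero s),
    fun s => (le_self s).trans (infConv_le_right h₁.map_zero s),
    fun d hd hd₁ hd₂ s => ?_⟩
  rw [← hd.lowerReg_eq hS.toCuO5]
  refine lowerReg_mono_right (fun f => le_infConv fun f₁ f₂ hf => ?_) s
  calc d f ≤ d (f₁ + f₂) := hd.mono hf
    _ = d f₁ + d f₂ := hd.map_add f₁ f₂
    _ ≤ l₁ f₁ + l₂ f₂ := add_le_add (hd₁ f₁) (hd₂ f₂)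

/-- the Kantorovich-type formula for the infimum of two functionals. -/
theorem inf_kantorovich {S : Type*} [AddCommMonoid S] [PartialOrder S]
    (hS : CuO6 S) (rm : RealMul S) (l₁ l₂ : S → ℝ≥0∞)
    (h₁ : IsFunctional l₁) (h₂ : IsFunctional l₂) :
    ∀ lam : S → ℝ≥0∞,
      (lam = fun f => sInf {x | ∃ f₁ f₂ : S, f ≤ f₁ + f₂ ∧ x = l₁ f₁ + l₂ f₂}) →
      IsFInf l₁ l₂ (fun f => sSup (lam '' {f' | CC f' f})) := by
  rintro _ rfl
  exact inf_kantorovich_general hS rm.isTwoDivisible h₁ h₂
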